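/- Fix an integer n ≥ 1, a real c > 0, a constant c₁ ∈ ℝ, and a sign σ ∈ {+1, −1}. Define β(y) = σ / ( tan(c·y) · sqrt( c²·n² + c₁·sin(c·y)^{2n} ) ) on the open set U = { y ∈ (0, π/(2c)) : c²·n² + c₁·sin(c·y)^{2n} > 0 }. Then β is differentiable on U and satisfies β'(y) = β(y)·[ (1/b_II(y)² − β(y)²)·d_II·b_II(y) − b_II'(y)/b_II(y) ] for all y ∈ U, where b_II(y) = n·c·tan(c·y) and d_II = −c²·n². -/

import Mathlib

open Real Set Filter Topology

/-- The type II warping function `b_II(y) = n·c·tan(c·y)`. -/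
noncomputable def bII (n : ℕ) (c : ℝ) : ℝ → ℝ := fun y => (n : ℝ) * c * Real.tan (c * y)

/-- The explicit solution `β(y) = σ / (tan(c·y)·√(c²n² + c₁·sin(c·y)^{2n}))`. -/
noncomputable def betaII (n : ℕ) (c c₁ σ : ℝ) : ℝ → ℝ := fun y =>
  σ / (Real.tan (c * y) * Real.sqrt (c ^ 2 * (n : ℝ) ^ 2 + c₁ * Real.sin (c * y) ^ (2 * n)))

/-!
The ODE is of Bernoulli type: the logarithmic derivative of `β = a / (b √Q)` is
`-b' / b - Q' / (2 Q)`, so `β` is a solution as soon as `Q' = -2 (d / b) (Q - a²)`, a linear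
equation. For `b = n c tan (c y)` and `d = -a² = -c² n²` it reads
`Q' = 2 n c cot (c y) (Q - c² n²)`, whose solutions are `Q = c² n² + c₁ sin (c y) ^ (2 n)`.
-/

section Bernoulli

variable {a d y : ℝ} {b Q : ℝ → ℝ}

theorem hasDerivAt_const_div_mul_sqrt {b' Q' : ℝ} (hb : HasDerivAt b b' y)
    (hQ : HasDerivAt Q Q' y) (hb₀ : b y ≠ 0) (hQ₀ : 0 < Q y) :
    HasDerivAt (fun z => a / (b z * √(Q z)))
      (a / (b y * √(Q y)) * (-(b' / b y) - Q' / (2 * Q y))) y := by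
  have hsqrt : √(Q y) ≠ 0 := (Real.sqrt_pos.2 hQ₀).ne'
  have hsq : √(Q y) ^ 2 = Q y := Real.sq_sqrt hQ₀.le
  refine ((hasDerivAt_const y a).fun_div (hb.fun_mul (hQ.sqrt hQ₀.ne'))
    (mul_ne_zero hb₀ hsqrt)).congr_deriv ?_
  rw [← hsq, Real.sqrt_sq (Real.sqrt_nonneg _)]
  field_simp
  ring

theorem hasDerivAt_const_div_mul_sqrt_of_linear_ODE (hb : DifferentiableAt ℝ b y)
    (hQ : HasDerivAt Q (-(2 * (d / b y) * (Q y - a ^ 2))) y) (hb₀ : b y ≠ 0) (hQ₀ : 0 < Q y) :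
    HasDerivAt (fun z => a / (b z * √(Q z)))
      (a / (b y * √(Q y)) *
        ((1 / b y ^ 2 - (a / (b y * √(Q y))) ^ 2) * d * b y - deriv b y / b y)) y := by
  refine (hasDerivAt_const_div_mul_sqrt hb.hasDerivAt hQ hb₀ hQ₀).congr_deriv ?_
  have hβ_sq : (a / (b y * √(Q y))) ^ 2 = a ^ 2 / (b y ^ 2 * Q y) := by
    rw [div_pow, mul_pow, Real.sq_sqrt hQ₀.le]
  rw [hβ_sq]
  congr 1
  field_simp
  ring

end Bernoulli

theorem hasDerivAt_sin_const_mul_pow (m : ℕ) {c y : ℝ} (hsin : sin (c * y) ≠ 0) :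
    HasDerivAt (fun z => sin (c * z) ^ m) (m * c * cot (c * y) * sin (c * y) ^ m) y := by
  refine ((hasDerivAt_const_mul c).sin.fun_pow m).congr_deriv ?_
  rw [Real.cot_eq_cos_div_sin]
  cases m with
  | zero => simp
  | succ k =>
    rw [Nat.add_sub_cancel, pow_succ]
    field_simp

theorem differentiableAt_bII (n : ℕ) {c y : ℝ} (hcos : cos (c * y) ≠ 0) :
    DifferentiableAt ℝ (bII n c) y :=
  ((Real.differentiableAt_tan.2 hcos).comp y
    (differentiableAt_id.const_mul c)).const_mul ((n : ℝ) * c)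

theorem betaII_eq_div_bII_mul_sqrt {n : ℕ} {c : ℝ} (hn : n ≠ 0) (hc : c ≠ 0) (c₁ σ : ℝ) :
    betaII n c c₁ σ = fun y =>
      n * c * σ / (bII n c y * √(c ^ 2 * (n : ℝ) ^ 2 + c₁ * sin (c * y) ^ (2 * n))) := by
  have hnc : (n : ℝ) * c ≠ 0 := mul_ne_zero (Nat.cast_ne_zero.2 hn) hc
  funext y
  rw [betaII, bII, mul_assoc _ (tan _), mul_div_mul_left _ _ hnc]

theorem hasDerivAt_betaII_radicand {n : ℕ} {c y : ℝ} (hn : n ≠ 0) (htan : tan (c * y) ≠ 0)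
    (c₁ : ℝ) :
    HasDerivAt (fun z => c ^ 2 * (n : ℝ) ^ 2 + c₁ * sin (c * z) ^ (2 * n))
      (-(2 * (-(c ^ 2 * (n : ℝ) ^ 2) / bII n c y) * (c₁ * sin (c * y) ^ (2 * n)))) y := by
  have hn₀ : (n : ℝ) ≠ 0 := Nat.cast_ne_zero.2 hn
  have hc : c ≠ 0 := by rintro rfl; simp at htan
  have hsin : sin (c * y) ≠ 0 := fun h => htan (by rw [Real.tan_eq_sin_div_cos, h, zero_div])
  refine (((hasDerivAt_sin_const_mul_pow (2 * n) hsin).const_mul c₁).const_add _).congr_deriv ?_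
  rw [bII, ← Real.tan_inv_eq_cot]
  push_cast
  field_simp

theorem betaII_solves_ODE_general {n : ℕ} (hn : n ≠ 0) {c c₁ σ y : ℝ} (hσ : σ ^ 2 = 1)
    (htan : tan (c * y) ≠ 0)
    (hQ : 0 < c ^ 2 * (n : ℝ) ^ 2 + c₁ * sin (c * y) ^ (2 * n)) :
    HasDerivAt (betaII n c c₁ σ)
      (betaII n c c₁ σ y *
        ((1 / (bII n c y) ^ 2 - (betaII n c c₁ σ y) ^ 2) * (-(c ^ 2 * (n : ℝ) ^ 2)) * bII n c y
          - deriv (bII n c) y / bII n c y)) y := by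
  have hc : c ≠ 0 := by rintro rfl; simp at htan
  have hcos : cos (c * y) ≠ 0 := fun h => htan (by rw [Real.tan_eq_sin_div_cos, h, div_zero])
  have hb₀ : bII n c y ≠ 0 := mul_ne_zero (mul_ne_zero (Nat.cast_ne_zero.2 hn) hc) htan
  have ha_sq : (n * c * σ) ^ 2 = c ^ 2 * (n : ℝ) ^ 2 := by rw [mul_pow, hσ]; ring
  rw [betaII_eq_div_bII_mul_sqrt hn hc]
  refine hasDerivAt_const_div_mul_sqrt_of_linear_ODE (differentiableAt_bII n hcos) ?_ hb₀ hQ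
  rw [ha_sq, add_sub_cancel_left]
  exact hasDerivAt_betaII_radicand hn htan c₁

/-- For `σ = ±1`, the function `β` is differentiable on
`U = {y ∈ (0, π/(2c)) : c²n² + c₁·sin(c·y)^{2n} > 0}` and satisfies there the first-order
ODE `β' = β·[(1/b_II² − β²)·d_II·b_II − b_II'/b_II]`, with `d_II = -c²n²`. -/
theorem betaII_solves_ODE (n : ℕ) (hn : 1 ≤ n) (c : ℝ) (hc : 0 < c)
    (c₁ σ : ℝ) (hσ : σ = 1 ∨ σ = -1) :
    ∀ y ∈ {y ∈ Set.Ioo 0 (π / (2 * c)) |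
        0 < c ^ 2 * (n : ℝ) ^ 2 + c₁ * Real.sin (c * y) ^ (2 * n)},
      HasDerivAt (betaII n c c₁ σ)
        (betaII n c c₁ σ y *
          ((1 / (bII n c y) ^ 2 - (betaII n c c₁ σ y) ^ 2) * (-(c ^ 2 * (n : ℝ) ^ 2))
              * bII n c y
            - deriv (bII n c) y / bII n c y)) y := by
  rintro y ⟨⟨hy₀, hy₁⟩, hQ⟩
  have hcy : c * y < π / 2 := by rw [lt_div_iff₀ (by positivity)] at hy₁; linarith
  exact betaII_solves_ODE_general (Nat.one_le_iff_ne_zero.1 hn) (sq_eq_one_iff.2 hσ)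
    (Real.tan_pos_of_pos_of_lt_pi_div_two (mul_pos hc hy₀) hcy).ne' hQ
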